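/- Let X be a measurable space equipped with a partial order such that the set {(x,y) ∈ X × X : y ≤ x} and the diagonal {(x,x) : x ∈ X} are measurable in X × X. Let μ, ν be probability measures on X with μ ≠ ν, let ρ⁺ and ρ⁻ be the Jordan decomposition parts of the signed measure μ − ν, and set m = ρ⁺(X) (so also m = ρ⁻(X) > 0). Suppose φ is a probability measure on X × X whose first marginal is ρ⁺/m, whose second marginal is ρ⁻/m, and which satisfies φ({(x,y) : y ≤ x}) = 1. Then there exists a probability measure Ψ on X × X whose first marginal is μ, whose second marginal is ν, such that Ψ({(x,y) : y ≤ x}) = 1 and Ψ({(x,y) : x ≠ y}) = m. -/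

import Mathlib

open MeasureTheory

/-!
With `ρ⁺ = μ - ν`, `ρ⁻ = ν - μ` and `κ = μ ⊓ ν` the common mass, one has `μ = κ + ρ⁺` and
`ν = κ + ρ⁻`. Hence `m • φ`, which transports `ρ⁺` to `ρ⁻`, plus the image of `κ` on the diagonal
couples `μ` with `ν`. The image of `κ` is carried by the diagonal, hence by every reflexive
relation; `m • φ` does not charge the diagonal, because its marginals are mutually singular.
-/

section

variable {X : Type*} [MeasurableSpace X]

theorem measure_inf_add_sub (μ ν : Measure X) [IsFiniteMeasure μ] [IsFiniteMeasure ν] :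
    μ ⊓ ν + (μ - ν) = μ := by
  have : IsFiniteMeasure (μ ⊓ ν) := isFiniteMeasure_of_le μ inf_le_left
  apply le_antisymm
  · have hsub : μ - ν ≤ μ - μ ⊓ ν := Measure.sub_le_of_le_add <|
      calc μ = μ - μ ⊓ ν + μ ⊓ ν := (Measure.sub_add_cancel_of_le inf_le_left).symm
        _ ≤ μ - μ ⊓ ν + ν := by gcongr; exact inf_le_right
    calc μ ⊓ ν + (μ - ν) ≤ μ ⊓ ν + (μ - μ ⊓ ν) := by gcongr
      _ = μ := by rw [add_comm, Measure.sub_add_cancel_of_le inf_le_left]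
  · have hadd : μ ≤ ν + (μ - ν) := by
      rw [add_comm]
      exact Measure.sub_le_iff_le_add.mp le_rfl
    have hinf : μ - (μ - ν) ≤ μ ⊓ ν := le_inf Measure.sub_le (Measure.sub_le_of_le_add hadd)
    exact Measure.sub_le_iff_le_add.mp hinf

/-- The identity coupling of `κ` with itself: the image of `κ` under `x ↦ (x, x)`. It moves no
mass. -/
noncomputable def identityCoupling (κ : Measure X) : Measure (X × X) :=
  κ.map Function.diag

theorem fst_identityCoupling (κ : Measure X) : (identityCoupling κ).fst = κ :=
  (Measure.fst_map_prodMk measurable_id).trans Measure.map_id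

theorem snd_identityCoupling (κ : Measure X) : (identityCoupling κ).snd = κ :=
  (Measure.snd_map_prodMk measurable_id).trans Measure.map_id

theorem identityCoupling_univ (κ : Measure X) : identityCoupling κ Set.univ = κ Set.univ := by
  rw [← Measure.fst_univ, fst_identityCoupling]

theorem identityCoupling_of_diagonal_subset (κ : Measure X) {R : Set (X × X)}
    (hR : Set.diagonal X ⊆ R) : identityCoupling κ R = κ Set.univ := by
  apply le_antisymm
  · exact (measure_mono R.subset_univ).trans_eq (identityCoupling_univ κ)
  · have hpre : Function.diag ⁻¹' R = Set.univ :=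
      Set.eq_univ_of_forall (Set.diagonal_subset_iff.mp hR)
    -- `R` may fail to be measurable, in which case only this half of `map_apply` is available.
    calc κ Set.univ = κ (Function.diag ⁻¹' R) := by rw [hpre]
      _ ≤ identityCoupling κ R := Measure.le_map_apply measurable_diag.aemeasurable R

theorem identityCoupling_compl_diagonal (hdiag : MeasurableSet (Set.diagonal X))
    (κ : Measure X) : identityCoupling κ (Set.diagonal X)ᶜ = 0 := by
  rw [identityCoupling, Measure.map_apply measurable_diag hdiag.compl, ← Set.range_diag,
    Set.preimage_compl, Set.preimage_range, Set.compl_univ, measure_empty]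

variable {θ : Measure (X × X)}

theorem measure_diagonal_eq_zero_of_mutuallySingular (h : θ.fst.MutuallySingular θ.snd) :
    θ (Set.diagonal X) = 0 := by
  have hfst : θ (Prod.fst ⁻¹' h.nullSet) = 0 := by
    rw [← Measure.fst_apply h.measurableSet_nullSet, h.measure_nullSet]
  have hsnd : θ (Prod.snd ⁻¹' h.nullSetᶜ) = 0 := by
    rw [← Measure.snd_apply h.measurableSet_nullSet.compl, h.measure_compl_nullSet]
  refine measure_mono_null ?_ (measure_union_null hfst hsnd)
  exact Set.diagonal_subset_iff.mpr fun x ↦ em (x ∈ h.nullSet)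

theorem measure_compl_diagonal_of_mutuallySingular (h : θ.fst.MutuallySingular θ.snd) :
    θ (Set.diagonal X)ᶜ = θ Set.univ :=
  measure_of_measure_compl_eq_zero <| by
    rw [compl_compl, measure_diagonal_eq_zero_of_mutuallySingular h]

/-- The coupling of `μ` and `ν` that leaves their common part `μ ⊓ ν` in place and moves the excess
`μ - ν` onto the deficit `ν - μ` according to the (unnormalized) coupling `θ`. -/
noncomputable def jordanGluing (μ ν : Measure X) (θ : Measure (X × X)) : Measure (X × X) :=
  identityCoupling (μ ⊓ ν) + θ

variable {μ ν : Measure X}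

theorem jordanGluing_compl_diagonal (hdiag : MeasurableSet (Set.diagonal X))
    (hθ : θ.fst.MutuallySingular θ.snd) :
    jordanGluing μ ν θ (Set.diagonal X)ᶜ = θ Set.univ := by
  rw [jordanGluing, Measure.add_apply, identityCoupling_compl_diagonal hdiag, zero_add,
    measure_compl_diagonal_of_mutuallySingular hθ]

theorem jordanGluing_of_diagonal_subset {R : Set (X × X)} (hR : Set.diagonal X ⊆ R)
    (hθ : θ R = θ Set.univ) : jordanGluing μ ν θ R = jordanGluing μ ν θ Set.univ := by
  simp only [jordanGluing, Measure.add_apply, hθ, identityCoupling_of_diagonal_subset _ hR,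
    identityCoupling_univ]

variable [IsFiniteMeasure μ] [IsFiniteMeasure ν]

theorem fst_jordanGluing (hθ : θ.fst = μ - ν) : (jordanGluing μ ν θ).fst = μ := by
  rw [jordanGluing, Measure.fst_add, fst_identityCoupling, hθ, measure_inf_add_sub]

theorem snd_jordanGluing (hθ : θ.snd = ν - μ) : (jordanGluing μ ν θ).snd = ν := by
  rw [jordanGluing, Measure.snd_add, snd_identityCoupling, hθ, inf_comm, measure_inf_add_sub]

end

theorem map_smul_eq_of_map_eq_inv_smul {Y Z : Type*} [MeasurableSpace Y] [MeasurableSpace Z]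
    {φ : Measure Y} {ρ : Measure Z} {f : Y → Z} {m : ENNReal} (hm : m * m⁻¹ = 1)
    (h : φ.map f = m⁻¹ • ρ) : (m • φ).map f = ρ := by
  rw [Measure.map_smul, h, smul_smul, hm, one_smul]

theorem monotone_optimal_coupling_of_jordan_coupling_general
    {X : Type*} [MeasurableSpace X] (hdiag : MeasurableSet (Set.diagonal X))
    {R : Set (X × X)} (hR : Set.diagonal X ⊆ R)
    (μ ν : Measure X) [IsFiniteMeasure μ] [IsFiniteMeasure ν]
    (ρplus ρminus : Measure X)
    (hplus : ρplus = (μ.toSignedMeasure - ν.toSignedMeasure).toJordanDecomposition.posPart)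
    (hminus : ρminus = (μ.toSignedMeasure - ν.toSignedMeasure).toJordanDecomposition.negPart)
    (m : ENNReal) (hm : m = ρplus Set.univ)
    (φ : Measure (X × X)) [IsProbabilityMeasure φ]
    (hfst : φ.map Prod.fst = m⁻¹ • ρplus)
    (hsnd : φ.map Prod.snd = m⁻¹ • ρminus)
    (hφR : φ R = 1) :
    ∃ Ψ : Measure (X × X),
      Ψ.map Prod.fst = μ ∧ Ψ.map Prod.snd = ν ∧
      Ψ R = μ Set.univ ∧
      Ψ (Set.diagonal X)ᶜ = m := by
  rw [Measure.toJordanDecomposition_toSignedMeasure_sub] at hplus hminus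
  -- The total mass of `hfst` rules out the junk cases `m = 0` and `m = ∞` of `m⁻¹`.
  have hmul : m * m⁻¹ = 1 := by
    calc m * m⁻¹ = (m⁻¹ • ρplus) Set.univ := by
          rw [Measure.smul_apply, smul_eq_mul, ← hm, mul_comm]
      _ = 1 := by rw [← hfst, ← Measure.fst, Measure.fst_univ, measure_univ]
  have hθuniv : (m • φ) Set.univ = m := by simp
  have hθfst : (m • φ).fst = μ - ν := (map_smul_eq_of_map_eq_inv_smul hmul hfst).trans hplus
  have hθsnd : (m • φ).snd = ν - μ := (map_smul_eq_of_map_eq_inv_smul hmul hsnd).trans hminus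
  have hsing : (m • φ).fst.MutuallySingular (m • φ).snd :=
    hθfst ▸ hθsnd ▸ Measure.mutually_singular_measure_sub
  have hθR : (m • φ) R = (m • φ) Set.univ := by simp [hφR]
  have hΨfst := fst_jordanGluing hθfst
  refine ⟨jordanGluing μ ν (m • φ), hΨfst, snd_jordanGluing hθsnd, ?_, ?_⟩
  · rw [jordanGluing_of_diagonal_subset hR hθR, ← Measure.fst_univ, hΨfst]
  · rw [jordanGluing_compl_diagonal hdiag hsing, hθuniv]

theorem monotone_optimal_coupling_of_jordan_coupling
    {X : Type*} [MeasurableSpace X] [PartialOrder X]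
    (hle : MeasurableSet {p : X × X | p.2 ≤ p.1})
    (hdiag : MeasurableSet {p : X × X | p.1 = p.2})
    (μ ν : Measure X) [IsProbabilityMeasure μ] [IsProbabilityMeasure ν]
    (hne : μ ≠ ν)
    (ρplus ρminus : Measure X)
    (hplus : ρplus = (μ.toSignedMeasure - ν.toSignedMeasure).toJordanDecomposition.posPart)
    (hminus : ρminus = (μ.toSignedMeasure - ν.toSignedMeasure).toJordanDecomposition.negPart)
    (m : ENNReal) (hm : m = ρplus Set.univ)
    (φ : Measure (X × X)) [IsProbabilityMeasure φ]
    (hfst : φ.map Prod.fst = m⁻¹ • ρplus)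
    (hsnd : φ.map Prod.snd = m⁻¹ • ρminus)
    (hφmono : φ {p : X × X | p.2 ≤ p.1} = 1) :
    ∃ Ψ : Measure (X × X), IsProbabilityMeasure Ψ ∧
      Ψ.map Prod.fst = μ ∧ Ψ.map Prod.snd = ν ∧
      Ψ {p : X × X | p.2 ≤ p.1} = 1 ∧
      Ψ {p : X × X | p.1 ≠ p.2} = m := by
  obtain ⟨Ψ, hΨfst, hΨsnd, hΨmono, hΨne⟩ :=
    monotone_optimal_coupling_of_jordan_coupling_general hdiag
      (Set.diagonal_subset_iff.mpr le_refl) μ ν ρplus ρminus hplus hminus m hm φ hfst hsnd hφmono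
  have hΨ : Ψ Set.univ = 1 := by rw [← Measure.fst_univ, Measure.fst, hΨfst, measure_univ]
  exact ⟨Ψ, ⟨hΨ⟩, hΨfst, hΨsnd, hΨmono.trans measure_univ, hΨne⟩
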